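/- For every τ in the complex upper half plane, E_{4,2}(τ) − E'_{4,2}(τ) = 32·η(4τ)⁸/η(2τ)⁴, E_{4,2}(τ) + E'_{4,2}(τ) = 2·η(τ)⁸/η(2τ)⁴, E_{4,2}(τ)² − E'_{4,2}(τ)² = 64·(η(τ)η(4τ)/η(2τ))⁸, and η(2τ)²⁴ = (η(τ)η(4τ))⁸·(η(τ)⁸ + 16·η(4τ)⁸). -/

import Mathlib

open Complex

/-- `q = exp(2πiτ)`. -/
noncomputable def qq (τ : ℂ) : ℂ := Complex.exp (2 * Real.pi * Complex.I * τ)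

/-- `σ_k(n) = Σ_{d ∣ n} d^k`, as a complex number. -/
noncomputable def sigmaC (k n : ℕ) : ℂ := ∑ d ∈ n.divisors, (d : ℂ) ^ k

/-- Eisenstein series `E₂(τ) = 1 - 24 Σ_{n≥1} σ₁(n) qⁿ`. -/
noncomputable def E₂ (τ : ℂ) : ℂ := 1 - 24 * ∑' n : ℕ, sigmaC 1 (n + 1) * qq τ ^ (n + 1)

/-- Eisenstein series `E₄(τ) = 1 + 240 Σ_{n≥1} σ₃(n) qⁿ`. -/
noncomputable def E₄ (τ : ℂ) : ℂ := 1 + 240 * ∑' n : ℕ, sigmaC 3 (n + 1) * qq τ ^ (n + 1)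

/-- Eisenstein series `E₆(τ) = 1 - 504 Σ_{n≥1} σ₅(n) qⁿ`. -/
noncomputable def E₆ (τ : ℂ) : ℂ := 1 - 504 * ∑' n : ℕ, sigmaC 5 (n + 1) * qq τ ^ (n + 1)

/-- Dedekind eta function `η(τ) = exp(πiτ/12) ∏_{n≥1} (1 - qⁿ)`. -/
noncomputable def η (τ : ℂ) : ℂ :=
  Complex.exp (Real.pi * Complex.I * τ / 12) * ∏' n : ℕ, (1 - qq τ ^ (n + 1))

/-- Theta function `θ(τ) = Σ_{n ∈ ℤ} q^{n²}`. -/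
noncomputable def θ (τ : ℂ) : ℂ := ∑' n : ℤ, qq τ ^ (n ^ 2)

/-- The character `χ₋₄`: `χ₋₄(d) = 1, -1, 0` according as `d ≡ 1, 3, 0/2 (mod 4)`. -/
noncomputable def χ₄ (d : ℕ) : ℂ := if d % 4 = 1 then 1 else if d % 4 = 3 then -1 else 0

/-- The character `χ₋₃`: `χ₋₃(d) = 1, -1, 0` according as `d ≡ 1, 2, 0 (mod 3)`. -/
noncomputable def χ₃ (d : ℕ) : ℂ := if d % 3 = 1 then 1 else if d % 3 = 2 then -1 else 0

/-- `E_{1,-4}(τ) = 1/4 + Σ_{n≥1} (Σ_{d∣n} χ₋₄(d)) qⁿ`. -/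
noncomputable def E₁₄ (τ : ℂ) : ℂ :=
  1 / 4 + ∑' n : ℕ, (∑ d ∈ (n + 1).divisors, χ₄ d) * qq τ ^ (n + 1)

/-- `E_{1,-3}(τ) = 1/6 + Σ_{n≥1} (Σ_{d∣n} χ₋₃(d)) qⁿ`. -/
noncomputable def E₁₃ (τ : ℂ) : ℂ :=
  1 / 6 + ∑' n : ℕ, (∑ d ∈ (n + 1).divisors, χ₃ d) * qq τ ^ (n + 1)

/-- `E_{2,2}(τ) = 2E₂(2τ) - E₂(τ)`. -/
noncomputable def E₂₂ (τ : ℂ) : ℂ := 2 * E₂ (2 * τ) - E₂ τ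

/-- `E_{2,4}(τ) = (4E₄(2τ) - E₄(τ))/3`. -/
noncomputable def E₂₄ (τ : ℂ) : ℂ := (4 * E₄ (2 * τ) - E₄ τ) / 3

/-- `E_{3,2}(τ) = (3E₂(3τ) - E₂(τ))/2`. -/
noncomputable def E₃₂ (τ : ℂ) : ℂ := (3 * E₂ (3 * τ) - E₂ τ) / 2

/-- `E_{3,4}(τ) = (9E₄(3τ) - E₄(τ))/8`. -/
noncomputable def E₃₄ (τ : ℂ) : ℂ := (9 * E₄ (3 * τ) - E₄ τ) / 8

/-- `E_{4,2}(τ) = (4E₂(4τ) - E₂(τ))/3`. -/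
noncomputable def E₄₂ (τ : ℂ) : ℂ := (4 * E₂ (4 * τ) - E₂ τ) / 3

/-- `E'_{4,2}(τ) = 4E₂(4τ) - 4E₂(2τ) + E₂(τ)`. -/
noncomputable def E₄₂' (τ : ℂ) : ℂ := 4 * E₂ (4 * τ) - 4 * E₂ (2 * τ) + E₂ τ

/-- `f_{1,j}(τ) = 2E₂(τ) - ((3+(-1)ʲi√3)/6)E₂(τ/2) - ((3-(-1)ʲi√3)/6)E₂((τ+1)/2)`. -/
noncomputable def f₁ (j : ℕ) (τ : ℂ) : ℂ :=
  2 * E₂ τ - ((3 + (-1 : ℂ) ^ j * Complex.I * Real.sqrt 3) / 6) * E₂ (τ / 2)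
    - ((3 - (-1 : ℂ) ^ j * Complex.I * Real.sqrt 3) / 6) * E₂ ((τ + 1) / 2)

/-- `g_{1,j}(τ) = (3/2)E₂(τ) - (1/4) Σ_{0≤m≤2, m≢j (mod 3)} E₂((τ+m)/3)`. -/
noncomputable def g₁ (j : ℕ) (τ : ℂ) : ℂ :=
  (3 / 2) * E₂ τ -
    (1 / 4) * ∑ m ∈ (Finset.range 3).filter (fun m => ¬ m % 3 = j % 3), E₂ ((τ + m) / 3)

/-- `f_{2,j}(τ) = 4E_{1,-4}(τ) + (-1)ʲ·2i·(E_{1,-4}(τ/2) - E_{1,-4}((τ+1)/2))`. -/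
noncomputable def f₂ (j : ℕ) (τ : ℂ) : ℂ :=
  4 * E₁₄ τ + (-1 : ℂ) ^ j * 2 * Complex.I * (E₁₄ (τ / 2) - E₁₄ ((τ + 1) / 2))

/-- `f_{3,j}(τ) = 6E_{1,-3}(2τ) + (-1)ʲ·i√3·(E_{1,-3}(τ/2) - E_{1,-3}((τ+1)/2))`. -/
noncomputable def f₃ (j : ℕ) (τ : ℂ) : ℂ :=
  6 * E₁₃ (2 * τ) +
    (-1 : ℂ) ^ j * Complex.I * Real.sqrt 3 * (E₁₃ (τ / 2) - E₁₃ ((τ + 1) / 2))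

/-- `f_{4,j}(τ) = θ(τ/2 - (-1)ʲ/4)`. -/
noncomputable def f₄ (j : ℕ) (τ : ℂ) : ℂ := θ (τ / 2 - (-1 : ℂ) ^ j / 4)

/-- `g_{4,j}(τ) = 2θ(2τ)² - θ((τ+j)/2)²`. -/
noncomputable def g₄ (j : ℕ) (τ : ℂ) : ℂ := 2 * θ (2 * τ) ^ 2 - θ ((τ + j) / 2) ^ 2

/-- `E_{3,-3,1}(τ) = -1/9 + Σ_{n≥1} (Σ_{d∣n} d²χ₋₃(d)) qⁿ`. -/
noncomputable def E₃₃₁ (τ : ℂ) : ℂ :=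
  -(1 / 9) + ∑' n : ℕ, (∑ d ∈ (n + 1).divisors, (d : ℂ) ^ 2 * χ₃ d) * qq τ ^ (n + 1)

/-- `E_{3,1,-3}(τ) = Σ_{n≥1} (Σ_{d∣n} d²χ₋₃(n/d)) qⁿ`. -/
noncomputable def E₃₁₃ (τ : ℂ) : ℂ :=
  ∑' n : ℕ, (∑ d ∈ (n + 1).divisors, (d : ℂ) ^ 2 * χ₃ ((n + 1) / d)) * qq τ ^ (n + 1)

/-!
In terms of Jacobi's theta constants, `θ = η(2τ)⁵ / (η(τ) η(4τ))²`, `θ₂ = 2 η(4τ)² / η(2τ)` and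
`θ₄ = η(τ)² / η(2τ)` by the triple product, so the claims are `E₄₂ + E₄₂' = 2 θ₄⁴`,
`E₄₂ - E₄₂' = 2 θ₂⁴` and Jacobi's quartic identity `θ⁴ = θ₂⁴ + θ₄⁴`. The quartic identity follows
from the doubling formulas `θ(τ)² = θ(2τ)² + θ₂(2τ)²`, `θ₄(τ)² = θ(2τ)² - θ₂(2τ)²` and
`θ₂(τ)² = 2 θ(2τ) θ₂(2τ)`.

As `E₂` is a multiple of the logarithmic derivative of `η`, the sum `E₄₂ + E₄₂'` is one of that of
`θ₂ / θ`. Differentiating the first doubling formula shows that `(E₄₂ + E₄₂') / θ₄⁴` is invariant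
under `τ ↦ 2τ`, hence equal to its limit `2` at `i∞`. Differentiating the quartic identity then
gives `(E₄₂ - E₄₂') / θ₂⁴ = (E₄₂ + E₄₂') / θ₄⁴`.
-/

open Filter Topology

section QPochhammer

variable {K : Type*} [Field K] {q : K}

/-- The `q`-Pochhammer symbol `(q; q)_n = ∏_{k=1}^n (1 - qᵏ)`, from which the `q`-binomial
coefficients are built. -/
def qPochhammer (q : K) (n : ℕ) : K := ∏ k ∈ Finset.range n, (1 - q ^ (k + 1))

/-- The reciprocal `1 / (q; q)_m`, set to zero for `m < 0` so that the recurrence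
`invQPochhammer_sub_one` holds for every integer `m`. -/
def invQPochhammer (q : K) : ℤ → K
  | .ofNat n => (qPochhammer q n)⁻¹
  | .negSucc _ => 0

lemma invQPochhammer_natCast (q : K) (n : ℕ) : invQPochhammer q n = (qPochhammer q n)⁻¹ := rfl

lemma invQPochhammer_of_neg (q : K) {m : ℤ} (hm : m < 0) : invQPochhammer q m = 0 := by
  obtain ⟨n, rfl⟩ := Int.eq_negSucc_of_lt_zero hm
  rfl

lemma invQPochhammer_sub_one (hq : ∀ n : ℕ, q ^ (n + 1) ≠ 1) (m : ℤ) :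
    invQPochhammer q (m - 1) = (1 - q ^ m) * invQPochhammer q m := by
  rcases lt_trichotomy m 0 with hm | rfl | hm
  · rw [invQPochhammer_of_neg q hm, invQPochhammer_of_neg q (by lia), mul_zero]
  · rw [invQPochhammer_of_neg q (by lia), zpow_zero, sub_self, zero_mul]
  · obtain ⟨n, rfl⟩ : ∃ n : ℕ, m = (n + 1 : ℕ) := ⟨(m - 1).toNat, by lia⟩
    have hne : 1 - q ^ (n + 1) ≠ 0 := sub_ne_zero.mpr (hq n).symm
    rw [Nat.cast_add_one, add_sub_cancel_right, ← Nat.cast_add_one, zpow_natCast,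
      invQPochhammer_natCast, invQPochhammer_natCast, qPochhammer, qPochhammer,
      Finset.prod_range_succ, mul_inv, mul_left_comm, mul_inv_cancel₀ hne, mul_one]

/-- The central `q`-binomial coefficient `[2n, n + j]_q`, which vanishes for `|j| > n`. With base
`q²` these are the coefficients of the finite form of the Jacobi triple product. -/
def centralQBinom (q : K) (n : ℕ) (j : ℤ) : K :=
  qPochhammer q (2 * n) * (invQPochhammer q (n - j) * invQPochhammer q (n + j))

lemma centralQBinom_zero_left (q : K) (j : ℤ) :
    centralQBinom q 0 j = if j = 0 then 1 else 0 := by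
  split_ifs with hj
  · simp [hj, centralQBinom, qPochhammer, invQPochhammer]
  · rcases lt_or_gt_of_ne hj with h | h <;> simp [centralQBinom, invQPochhammer_of_neg, h]

lemma centralQBinom_succ_left (hq0 : q ≠ 0) (hq : ∀ n : ℕ, q ^ (n + 1) ≠ 1) (n : ℕ) (j : ℤ) :
    centralQBinom q (n + 1) j = (1 + q ^ (2 * n + 1)) * centralQBinom q n j +
      q ^ ((n : ℤ) + 1 - j) * centralQBinom q n (j - 1) +
      q ^ ((n : ℤ) + 1 + j) * centralQBinom q n (j + 1) := by
  set a : ℤ := n + 1 - j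
  set b : ℤ := n + 1 + j
  have recur_one (m : ℤ) := invQPochhammer_sub_one hq m
  have recur_two (m : ℤ) : invQPochhammer q (m - 2) =
      (1 - q ^ m / q) * ((1 - q ^ m) * invQPochhammer q m) := by
    rw [← recur_one, div_eq_mul_inv, ← zpow_sub_one₀ hq0, ← recur_one, sub_sub, one_add_one_eq_two]
  have hab : q ^ (2 * n + 2) = q ^ a * q ^ b := by
    rw [← zpow_add₀ hq0, ← zpow_natCast]
    congr 1
    lia
  have hab' : q ^ (2 * n + 1) = q ^ a * q ^ b / q := by
    rw [← hab, pow_succ q (2 * n + 1), mul_div_cancel_right₀ _ hq0]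
  -- In terms of the reciprocals at `a` and `b`, the recurrence is a polynomial identity in
  -- `q ^ a`, `q ^ b` and `q⁻¹`.
  simp only [centralQBinom, mul_add_one, qPochhammer, Finset.prod_range_succ, add_assoc,
    one_add_one_eq_two]
  rw [hab, hab', show ((n + 1 : ℕ) : ℤ) - j = a by lia, show ((n + 1 : ℕ) : ℤ) + j = b by lia,
    show (n : ℤ) - j = a - 1 by lia, show (n : ℤ) + j = b - 1 by lia,
    show (n : ℤ) - (j - 1) = a by lia, show (n : ℤ) + (j - 1) = b - 2 by lia,
    show (n : ℤ) - (j + 1) = a - 2 by lia, show (n : ℤ) + (j + 1) = b by lia,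
    recur_one, recur_one, recur_two, recur_two]
  ring

lemma hasSum_centralQBinom [TopologicalSpace K] [IsTopologicalRing K] (hq0 : q ≠ 0)
    (hq : ∀ n : ℕ, (q ^ 2) ^ (n + 1) ≠ 1) {z : K} (hz : z ≠ 0) (n : ℕ) :
    HasSum (fun j : ℤ ↦ centralQBinom (q ^ 2) n j * (q ^ (j ^ 2) * z ^ j))
      (∏ k ∈ Finset.range n, (1 + z * q ^ (2 * k + 1)) * (1 + z⁻¹ * q ^ (2 * k + 1))) := by
  induction n with
  | zero =>
    convert! hasSum_ite_eq (0 : ℤ) (1 : K) using 1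
    ext j
    rw [centralQBinom_zero_left]
    split_ifs with hj <;> simp [hj]
  | succ n ih =>
    have hdown := ((Equiv.subRight (1 : ℤ)).hasSum_iff.mpr ih).mul_left (q ^ (2 * n + 1) * z)
    have hup := ((Equiv.addRight (1 : ℤ)).hasSum_iff.mpr ih).mul_left (q ^ (2 * n + 1) * z⁻¹)
    convert! ((ih.mul_left (1 + (q ^ 2) ^ (2 * n + 1))).add hdown).add hup using 1
    · ext j
      have exp_down : (q ^ 2) ^ ((n : ℤ) + 1 - j) * q ^ (j ^ 2) =
          q ^ (2 * n + 1) * q ^ ((j - 1) ^ 2) := by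
        simp only [← zpow_natCast, ← zpow_mul, ← zpow_add₀ hq0]
        congr 1
        push_cast
        ring
      have exp_up : (q ^ 2) ^ ((n : ℤ) + 1 + j) * q ^ (j ^ 2) =
          q ^ (2 * n + 1) * q ^ ((j + 1) ^ 2) := by
        simp only [← zpow_natCast, ← zpow_mul, ← zpow_add₀ hq0]
        congr 1
        push_cast
        ring
      have z_down : z ^ j = z * z ^ (j - 1) := by rw [zpow_sub_one₀ hz]; field_simp
      have z_up : z ^ j = z⁻¹ * z ^ (j + 1) := by rw [zpow_add_one₀ hz]; field_simp
      simp only [Function.comp_apply, Equiv.subRight_apply, Equiv.coe_addRight]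
      rw [centralQBinom_succ_left (pow_ne_zero 2 hq0) hq]
      linear_combination centralQBinom (q ^ 2) n (j - 1) *
          (z ^ j * exp_down + q ^ (2 * n + 1) * q ^ ((j - 1) ^ 2) * z_down) +
        centralQBinom (q ^ 2) n (j + 1) *
          (z ^ j * exp_up + q ^ (2 * n + 1) * q ^ ((j + 1) ^ 2) * z_up)
    · rw [Finset.prod_range_succ]
      field_simp
      ring

end QPochhammer

section GeometricProducts

variable {𝕜 : Type*} [NormedField 𝕜] {q : 𝕜}

lemma norm_pow_lt_one (hq : ‖q‖ < 1) {n : ℕ} (hn : n ≠ 0) : ‖q ^ n‖ < 1 := by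
  rw [norm_pow]
  exact pow_lt_one₀ (norm_nonneg q) hq hn

lemma pow_succ_ne_one_of_norm_lt_one (hq : ‖q‖ < 1) (n : ℕ) : q ^ (n + 1) ≠ 1 := fun h ↦ by
  simpa [h] using norm_pow_lt_one hq n.succ_ne_zero

variable [CompleteSpace 𝕜]

lemma multipliable_one_add_mul_pow_succ (hq : ‖q‖ < 1) (z : 𝕜) :
    Multipliable fun k : ℕ ↦ 1 + z * q ^ (k + 1) := by
  have h : Summable fun k : ℕ ↦ ‖q‖ ^ (k + 1) :=
    (summable_nat_add_iff 1).mpr (summable_geometric_of_lt_one (norm_nonneg _) hq)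
  exact multipliable_one_add_of_summable (by simpa using h.mul_left ‖z‖)

lemma multipliable_one_add_mul_pow_odd (hq : ‖q‖ < 1) (z : 𝕜) :
    Multipliable fun k : ℕ ↦ 1 + z * q ^ (2 * k + 1) := by
  have h : Summable fun k : ℕ ↦ ‖q‖ ^ (2 * k + 1) :=
    (summable_geometric_of_lt_one (norm_nonneg q) hq).comp_injective
      (i := fun k : ℕ ↦ 2 * k + 1) fun a b hab ↦ by simpa using hab
  exact multipliable_one_add_of_summable (by simpa using h.mul_left ‖z‖)

lemma tprod_one_add_mul_pow_succ_eq_odd_mul_even (hq : ‖q‖ < 1) (z : 𝕜) :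
    ∏' k : ℕ, (1 + z * q ^ (k + 1)) =
      (∏' k : ℕ, (1 + z * q ^ (2 * k + 1))) * ∏' k : ℕ, (1 + z * (q ^ 2) ^ (k + 1)) := by
  have heven := multipliable_one_add_mul_pow_succ (norm_pow_lt_one hq two_ne_zero) z
  have hexp (k : ℕ) : (q ^ 2) ^ (k + 1) = q ^ (2 * k + 1 + 1) := by ring
  simp only [hexp] at heven ⊢
  exact (tprod_even_mul_odd (f := fun n : ℕ ↦ 1 + z * q ^ (n + 1))
    (multipliable_one_add_mul_pow_odd hq z) heven).symm

end GeometricProducts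

section EulerFunction

variable {q : ℂ}

/-- Euler's function `φ(q) = ∏_{n ≥ 1} (1 - qⁿ)`, the limit of `qPochhammer q`; it is the infinite
product in the definition of `η`. -/
noncomputable def eulerFunction (q : ℂ) : ℂ := ∏' n : ℕ, (1 - q ^ (n + 1))

lemma eulerFunction_ne_zero (hq : ‖q‖ < 1) : eulerFunction q ≠ 0 := by
  refine tprod_one_add_ne_zero_of_summable (f := fun n : ℕ ↦ -q ^ (n + 1)) (fun n ↦ ?_) ?_
  · simpa [← sub_eq_add_neg, sub_eq_zero] using (pow_succ_ne_one_of_norm_lt_one hq n).symm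
  · simpa using (summable_nat_add_iff 1).mpr (summable_geometric_of_lt_one (norm_nonneg _) hq)

lemma tendsto_qPochhammer (hq : ‖q‖ < 1) :
    Tendsto (qPochhammer q) atTop (𝓝 (eulerFunction q)) :=
  (ModularForm.multipliable_one_sub_pow hq).hasProd.tendsto_prod_nat

lemma tendsto_invQPochhammer (hq : ‖q‖ < 1) :
    Tendsto (invQPochhammer q) atTop (𝓝 (eulerFunction q)⁻¹) := by
  rw [← Nat.map_cast_int_atTop, tendsto_map'_iff]
  exact (tendsto_qPochhammer hq).inv₀ (eulerFunction_ne_zero hq)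

lemma exists_norm_invQPochhammer_le (hq : ‖q‖ < 1) : ∃ C, ∀ m, ‖invQPochhammer q m‖ ≤ C := by
  obtain ⟨C, hC⟩ :=
    ((tendsto_invQPochhammer hq).comp tendsto_natCast_atTop_atTop).norm.bddAbove_range
  have hC' (n : ℕ) : ‖invQPochhammer q n‖ ≤ C := hC ⟨n, rfl⟩
  refine ⟨C, fun m ↦ ?_⟩
  rcases lt_or_ge m 0 with hm | hm
  · simpa [invQPochhammer_of_neg q hm] using (norm_nonneg _).trans (hC' 0)
  · lift m to ℕ using hm
    exact hC' m

lemma tendsto_qPochhammer_two_mul (hq : ‖q‖ < 1) :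
    Tendsto (fun n ↦ qPochhammer q (2 * n)) atTop (𝓝 (eulerFunction q)) :=
  (tendsto_qPochhammer hq).comp (tendsto_id.const_mul_atTop' two_pos)

lemma tendsto_centralQBinom (hq : ‖q‖ < 1) (j : ℤ) :
    Tendsto (fun n ↦ centralQBinom q n j) atTop (𝓝 (eulerFunction q)⁻¹) := by
  have hsub : Tendsto (fun n : ℕ ↦ (n : ℤ) - j) atTop atTop :=
    tendsto_atTop_add_const_right _ _ tendsto_natCast_atTop_atTop
  have hadd : Tendsto (fun n : ℕ ↦ (n : ℤ) + j) atTop atTop :=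
    tendsto_atTop_add_const_right _ _ tendsto_natCast_atTop_atTop
  have hinv := tendsto_invQPochhammer hq
  simpa [centralQBinom, eulerFunction_ne_zero hq] using
    (tendsto_qPochhammer_two_mul hq).mul ((hinv.comp hsub).mul (hinv.comp hadd))

lemma exists_norm_centralQBinom_le (hq : ‖q‖ < 1) : ∃ C, ∀ n j, ‖centralQBinom q n j‖ ≤ C := by
  obtain ⟨A, hA⟩ := (tendsto_qPochhammer_two_mul hq).norm.bddAbove_range
  obtain ⟨B, hB⟩ := exists_norm_invQPochhammer_le hq
  have hA' (n : ℕ) : ‖qPochhammer q (2 * n)‖ ≤ A := hA ⟨n, rfl⟩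
  have hA0 : 0 ≤ A := (norm_nonneg _).trans (hA' 0)
  have hB0 : 0 ≤ B := (norm_nonneg _).trans (hB 0)
  refine ⟨A * (B * B), fun n j ↦ ?_⟩
  rw [centralQBinom, norm_mul, norm_mul]
  gcongr
  exacts [hA' n, hB _, hB _]

lemma tprod_one_add_pow_mul_eulerFunction (hq : ‖q‖ < 1) :
    (∏' k : ℕ, (1 + q ^ (k + 1))) * eulerFunction q = eulerFunction (q ^ 2) := by
  have h : Multipliable fun k : ℕ ↦ 1 + q ^ (k + 1) := by
    simpa using multipliable_one_add_mul_pow_succ hq 1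
  rw [eulerFunction, eulerFunction, ← h.tprod_mul (ModularForm.multipliable_one_sub_pow hq)]
  exact tprod_congr fun k ↦ by ring

lemma tprod_one_sub_pow_odd_mul_eulerFunction (hq : ‖q‖ < 1) :
    (∏' k : ℕ, (1 - q ^ (2 * k + 1))) * eulerFunction (q ^ 2) = eulerFunction q := by
  simpa [eulerFunction, ← sub_eq_add_neg] using
    (tprod_one_add_mul_pow_succ_eq_odd_mul_even hq (-1)).symm

lemma tprod_one_add_pow_odd_mul_eulerFunction (hq : ‖q‖ < 1) :
    (∏' k : ℕ, (1 + q ^ (2 * k + 1))) * (eulerFunction q * eulerFunction (q ^ 4)) =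
      eulerFunction (q ^ 2) ^ 2 := by
  have hq2 := norm_pow_lt_one hq two_ne_zero
  have hsplit := tprod_one_add_mul_pow_succ_eq_odd_mul_even hq 1
  have hall := tprod_one_add_pow_mul_eulerFunction hq
  have heven := tprod_one_add_pow_mul_eulerFunction hq2
  simp only [one_mul] at hsplit
  rw [← pow_mul] at heven
  rw [hsplit] at hall
  rw [← heven]
  linear_combination eulerFunction (q ^ 2) * hall

lemma continuousAt_eulerFunction (hq : ‖q‖ < 1) : ContinuousAt eulerFunction q :=
  (ModularForm.differentiableOn_tprod_one_sub_pow.differentiableAt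
    (Metric.isOpen_ball.mem_nhds (by simpa using hq))).continuousAt

lemma eulerFunction_zero : eulerFunction 0 = 1 := by simp [eulerFunction]

end EulerFunction

section Nome

lemma qq_zero : qq 0 = 1 := by simp [qq]

lemma qq_half : qq (1 / 2) = -1 := by
  rw [qq, mul_one_div, mul_assoc, mul_div_cancel_left₀ _ two_ne_zero, exp_pi_mul_I]

lemma qq_ne_zero (τ : ℂ) : qq τ ≠ 0 := exp_ne_zero _

lemma qq_natCast_mul (c : ℕ) (τ : ℂ) : qq (c * τ) = qq τ ^ c := by
  rw [qq, qq, ← exp_nat_mul, mul_left_comm]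

lemma norm_qq_lt_one {τ : ℂ} (hτ : 0 < τ.im) : ‖qq τ‖ < 1 :=
  UpperHalfPlane.norm_exp_two_pi_I_lt_one ⟨τ, hτ⟩

lemma ofNat_mul_im_pos {c : ℕ} [c.AtLeastTwo] {τ : ℂ} (hτ : 0 < τ.im) :
    0 < ((ofNat(c) : ℂ) * τ).im := by
  rw [← Nat.cast_ofNat, ← ofReal_natCast, im_ofReal_mul]
  exact mul_pos (Nat.cast_pos.mpr (NeZero.pos c)) hτ

end Nome

section TripleProduct

lemma jacobiTheta₂_term_two_mul (n : ℤ) (z τ : ℂ) :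
    jacobiTheta₂_term n z (2 * τ) = qq τ ^ (n ^ 2) * qq z ^ n := by
  rw [jacobiTheta₂_term, qq, qq, ← exp_int_mul, ← exp_int_mul, ← exp_add]
  push_cast
  ring_nf

lemma hasSum_jacobiTheta₂_two_mul {τ : ℂ} (hτ : 0 < τ.im) (z : ℂ) :
    HasSum (fun n : ℤ ↦ qq τ ^ (n ^ 2) * qq z ^ n) (jacobiTheta₂ z (2 * τ)) := by
  have h2τ : 0 < (2 * τ).im := ofNat_mul_im_pos hτ
  simpa only [jacobiTheta₂_term_two_mul] using hasSum_jacobiTheta₂_term z h2τ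

theorem jacobiTheta₂_two_mul_eq_tprod {τ : ℂ} (hτ : 0 < τ.im) (z : ℂ) :
    jacobiTheta₂ z (2 * τ) = eulerFunction (qq τ ^ 2) *
      ((∏' k : ℕ, (1 + qq z * qq τ ^ (2 * k + 1))) *
        ∏' k : ℕ, (1 + (qq z)⁻¹ * qq τ ^ (2 * k + 1))) := by
  have hq := norm_qq_lt_one hτ
  have hq2 := norm_pow_lt_one hq two_ne_zero
  have hθ := hasSum_jacobiTheta₂_two_mul hτ z
  obtain ⟨C, hC⟩ := exists_norm_centralQBinom_le hq2
  have htsum : Tendsto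
      (fun n ↦ ∑' j : ℤ, centralQBinom (qq τ ^ 2) n j * (qq τ ^ (j ^ 2) * qq z ^ j)) atTop
      (𝓝 (∑' j : ℤ, (eulerFunction (qq τ ^ 2))⁻¹ * (qq τ ^ (j ^ 2) * qq z ^ j))) := by
    refine tendsto_tsum_of_dominated_convergence (hθ.summable.norm.mul_left C)
      (fun j ↦ (tendsto_centralQBinom hq2 j).mul_const _) (.of_forall fun n j ↦ ?_)
    rw [norm_mul]
    gcongr
    exact hC n j
  have hprod := ((multipliable_one_add_mul_pow_odd hq (qq z)).hasProd.mul
    (multipliable_one_add_mul_pow_odd hq (qq z)⁻¹).hasProd).tendsto_prod_nat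
  simp only [(hasSum_centralQBinom (qq_ne_zero τ) (pow_succ_ne_one_of_norm_lt_one hq2)
    (qq_ne_zero z) _).tsum_eq] at htsum
  rw [← tendsto_nhds_unique htsum hprod, tsum_mul_left, hθ.tsum_eq,
    mul_inv_cancel_left₀ (eulerFunction_ne_zero hq2)]

end TripleProduct

section Addition

/-- The splitting of `ℤ × ℤ` into pairs with even and with odd coordinate sum. It underlies the
addition formula for theta functions. -/
noncomputable def parityEquiv : (ℤ × ℤ) ⊕ (ℤ × ℤ) ≃ ℤ × ℤ :=
  Equiv.ofBijective
    (Sum.elim (fun p ↦ (p.1 + p.2, p.1 - p.2)) (fun p ↦ (p.1 + p.2 + 1, p.1 - p.2))) <| by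
    constructor
    · rintro (⟨a, b⟩ | ⟨a, b⟩) (⟨c, d⟩ | ⟨c, d⟩) h <;>
        simp only [Sum.elim_inl, Sum.elim_inr, Prod.mk.injEq] at h <;>
        simp <;> lia
    · rintro ⟨m, n⟩
      rcases Int.even_or_odd' (m + n) with ⟨k, hk | hk⟩
      · exact ⟨.inl (k, m - k), by simp; lia⟩
      · exact ⟨.inr (k, m - k - 1), by simp; lia⟩

lemma parityEquiv_inl (p : ℤ × ℤ) : parityEquiv (.inl p) = (p.1 + p.2, p.1 - p.2) := rfl

lemma parityEquiv_inr (p : ℤ × ℤ) : parityEquiv (.inr p) = (p.1 + p.2 + 1, p.1 - p.2) := rfl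

lemma hasSum_jacobiTheta₂_mul {τ : ℂ} (hτ : 0 < τ.im) (z w : ℂ) :
    HasSum (fun p : ℤ × ℤ ↦ jacobiTheta₂_term p.1 z τ * jacobiTheta₂_term p.2 w τ)
      (jacobiTheta₂ z τ * jacobiTheta₂ w τ) := by
  have hz := (hasSum_jacobiTheta₂_term z hτ).summable.norm
  have hw := (hasSum_jacobiTheta₂_term w hτ).summable.norm
  rw [jacobiTheta₂, jacobiTheta₂, tsum_mul_tsum_of_summable_norm hz hw]
  exact (summable_mul_of_summable_norm hz hw).hasSum

theorem jacobiTheta₂_mul_jacobiTheta₂ {τ : ℂ} (hτ : 0 < τ.im) (z w : ℂ) :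
    jacobiTheta₂ z τ * jacobiTheta₂ w τ =
      jacobiTheta₂ (z + w) (2 * τ) * jacobiTheta₂ (z - w) (2 * τ) +
      cexp (Real.pi * I * (τ + 2 * z)) *
        (jacobiTheta₂ (z + w + τ) (2 * τ) * jacobiTheta₂ (z - w + τ) (2 * τ)) := by
  have h2τ : 0 < (2 * τ).im := ofNat_mul_im_pos hτ
  have heven := hasSum_jacobiTheta₂_mul h2τ (z + w) (z - w)
  have hodd := (hasSum_jacobiTheta₂_mul h2τ (z + w + τ) (z - w + τ)).mul_left
    (cexp (Real.pi * I * (τ + 2 * z)))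
  refine (parityEquiv.hasSum_iff.mpr (hasSum_jacobiTheta₂_mul hτ z w)).unique
    (.sum (heven.congr_fun fun p ↦ ?_) (hodd.congr_fun fun p ↦ ?_))
  all_goals
    simp only [Function.comp_apply, parityEquiv_inl, parityEquiv_inr, jacobiTheta₂_term, ← exp_add]
    push_cast
    ring_nf

end Addition

section ThetaConstants

/-- Jacobi's theta constant `θ₂(τ) = Σ_{n ∈ ℤ} q^{(n + 1/2)²}`, in the variable of the theta
constant `θ` (also known as `θ₃`). The factor `exp(πiτ/2)` is `q^{1/4}`, and `E₄₂ - E₄₂'` will be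
`2θ₂⁴`. -/
noncomputable def θ₂ (τ : ℂ) : ℂ := cexp (Real.pi * I * τ / 2) * jacobiTheta₂ τ (2 * τ)

/-- Jacobi's theta constant `θ₄(τ) = Σ_{n ∈ ℤ} (-1)ⁿ q^{n²}`, in the variable of the theta
constant `θ` (also known as `θ₃`), for which `E₄₂ + E₄₂'` will be `2θ₄⁴`. -/
noncomputable def θ₄ (τ : ℂ) : ℂ := jacobiTheta₂ (1 / 2) (2 * τ)

lemma θ_eq_jacobiTheta₂ (τ : ℂ) : θ τ = jacobiTheta₂ 0 (2 * τ) := by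
  simp only [θ, jacobiTheta₂, jacobiTheta₂_term_two_mul, qq_zero, one_zpow, mul_one]

variable {τ : ℂ}

lemma θ_sq (hτ : 0 < τ.im) : θ τ ^ 2 = θ (2 * τ) ^ 2 + θ₂ (2 * τ) ^ 2 := by
  have h2τ : 0 < (2 * τ).im := ofNat_mul_im_pos hτ
  have h := jacobiTheta₂_mul_jacobiTheta₂ h2τ 0 0
  have hexp : cexp (Real.pi * I * (2 * τ)) = cexp (Real.pi * I * (2 * τ) / 2) ^ 2 := by
    rw [← exp_nat_mul]
    ring_nf
  simp only [add_zero, sub_zero, zero_add, mul_zero, hexp] at h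
  rw [θ_eq_jacobiTheta₂, θ_eq_jacobiTheta₂, θ₂]
  linear_combination h

lemma θ₄_sq (hτ : 0 < τ.im) : θ₄ τ ^ 2 = θ (2 * τ) ^ 2 - θ₂ (2 * τ) ^ 2 := by
  have h2τ : 0 < (2 * τ).im := ofNat_mul_im_pos hτ
  have h := jacobiTheta₂_mul_jacobiTheta₂ h2τ (1 / 2) (1 / 2)
  have hexp : cexp (Real.pi * I * (2 * τ + 2 * (1 / 2))) =
      -cexp (Real.pi * I * (2 * τ) / 2) ^ 2 := by
    rw [← exp_nat_mul, ← exp_add_pi_mul_I]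
    ring_nf
  have hone := jacobiTheta₂_add_left 0 (2 * (2 * τ))
  have hadd := jacobiTheta₂_add_left (2 * τ) (2 * (2 * τ))
  rw [zero_add] at hone
  rw [add_comm] at hadd
  rw [hexp, add_halves, sub_self, zero_add, hone, hadd] at h
  rw [θ_eq_jacobiTheta₂, θ₂, θ₄]
  linear_combination h

lemma θ_mul_eulerFunction (hτ : 0 < τ.im) :
    θ τ * (eulerFunction (qq τ) * eulerFunction (qq τ ^ 4)) ^ 2 =
      eulerFunction (qq τ ^ 2) ^ 5 := by
  have hprod := tprod_one_add_pow_odd_mul_eulerFunction (norm_qq_lt_one hτ)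
  rw [θ_eq_jacobiTheta₂, jacobiTheta₂_two_mul_eq_tprod hτ, qq_zero]
  simp only [inv_one, one_mul]
  linear_combination eulerFunction (qq τ ^ 2) *
    ((∏' k : ℕ, (1 + qq τ ^ (2 * k + 1))) * (eulerFunction (qq τ) * eulerFunction (qq τ ^ 4)) +
      eulerFunction (qq τ ^ 2) ^ 2) * hprod

lemma θ₄_mul_eulerFunction (hτ : 0 < τ.im) :
    θ₄ τ * eulerFunction (qq τ ^ 2) = eulerFunction (qq τ) ^ 2 := by
  rw [θ₄, jacobiTheta₂_two_mul_eq_tprod hτ, qq_half,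
    ← tprod_one_sub_pow_odd_mul_eulerFunction (norm_qq_lt_one hτ)]
  simp only [inv_neg, inv_one, neg_one_mul, ← sub_eq_add_neg]
  ring

lemma θ₂_mul_eulerFunction (hτ : 0 < τ.im) :
    θ₂ τ * eulerFunction (qq τ ^ 2) =
      2 * cexp (Real.pi * I * τ / 2) * eulerFunction (qq τ ^ 4) ^ 2 := by
  have hq2 := norm_pow_lt_one (norm_qq_lt_one hτ) two_ne_zero
  have hprod := tprod_one_add_pow_mul_eulerFunction hq2
  have hpos (k : ℕ) : qq τ * qq τ ^ (2 * k + 1) = (qq τ ^ 2) ^ (k + 1) := by ring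
  have hneg (k : ℕ) : (qq τ)⁻¹ * qq τ ^ (2 * k + 1) = (qq τ ^ 2) ^ k := by
    rw [pow_succ', inv_mul_cancel_left₀ (qq_ne_zero τ), pow_mul]
  have hzero : ∏' k : ℕ, (1 + (qq τ ^ 2) ^ k) = 2 * ∏' k : ℕ, (1 + (qq τ ^ 2) ^ (k + 1)) := by
    have := multipliable_one_add_mul_pow_succ hq2 1
    simp only [one_mul] at this
    rw [tprod_eq_zero_mul' (f := fun k ↦ 1 + (qq τ ^ 2) ^ k) this, pow_zero, one_add_one_eq_two]
  rw [← pow_mul] at hprod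
  rw [θ₂, jacobiTheta₂_two_mul_eq_tprod hτ]
  simp only [hpos, hneg, hzero]
  rw [← hprod]
  ring

end ThetaConstants

section Eta

lemma η_natCast_mul (c : ℕ) (τ : ℂ) :
    η (c * τ) = cexp (Real.pi * I * τ / 12) ^ c * eulerFunction (qq τ ^ c) := by
  rw [η, eulerFunction, qq_natCast_mul, ← exp_nat_mul]
  congr 2
  ring

lemma η_eq_eta : η = ModularForm.eta := by
  ext τ
  simp only [η, ModularForm.eta, qq, ModularForm.eta_q_eq_pow, Function.Periodic.qParam]
  congr 2
  push_cast
  ring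

lemma η_ne_zero {τ : ℂ} (hτ : 0 < τ.im) : η τ ≠ 0 := by
  rw [η_eq_eta]
  exact ModularForm.eta_ne_zero hτ

variable {τ : ℂ}

lemma θ_eq_η (hτ : 0 < τ.im) :
    θ τ = η (2 * τ) ^ 5 / (η τ * η (4 * τ)) ^ 2 := by
  have h1 := η_natCast_mul 1 τ
  have h2 := η_natCast_mul 2 τ
  have h4 := η_natCast_mul 4 τ
  simp only [Nat.cast_one, Nat.cast_ofNat, one_mul, pow_one] at h1 h2 h4
  rw [eq_div_iff (pow_ne_zero 2 (mul_ne_zero (η_ne_zero hτ) (η_ne_zero (ofNat_mul_im_pos hτ)))),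
    h1, h2, h4]
  linear_combination cexp (Real.pi * I * τ / 12) ^ 10 * θ_mul_eulerFunction hτ

lemma θ₄_eq_η (hτ : 0 < τ.im) : θ₄ τ = η τ ^ 2 / η (2 * τ) := by
  have h1 := η_natCast_mul 1 τ
  have h2 := η_natCast_mul 2 τ
  simp only [Nat.cast_one, Nat.cast_ofNat, one_mul, pow_one] at h1 h2
  rw [eq_div_iff (η_ne_zero (ofNat_mul_im_pos hτ)), h1, h2]
  linear_combination cexp (Real.pi * I * τ / 12) ^ 2 * θ₄_mul_eulerFunction hτ

lemma θ₂_eq_η (hτ : 0 < τ.im) : θ₂ τ = 2 * η (4 * τ) ^ 2 / η (2 * τ) := by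
  have h2 := η_natCast_mul 2 τ
  have h4 := η_natCast_mul 4 τ
  simp only [Nat.cast_ofNat] at h2 h4
  have hexp : cexp (Real.pi * I * τ / 2) = cexp (Real.pi * I * τ / 12) ^ 6 := by
    rw [← exp_nat_mul]
    ring_nf
  have h := θ₂_mul_eulerFunction hτ
  rw [hexp] at h
  rw [eq_div_iff (η_ne_zero (ofNat_mul_im_pos hτ)), h2, h4]
  linear_combination cexp (Real.pi * I * τ / 12) ^ 2 * h

lemma θ_ne_zero (hτ : 0 < τ.im) : θ τ ≠ 0 := by
  rw [θ_eq_η hτ]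
  exact div_ne_zero (pow_ne_zero _ (η_ne_zero (ofNat_mul_im_pos hτ)))
    (pow_ne_zero _ (mul_ne_zero (η_ne_zero hτ) (η_ne_zero (ofNat_mul_im_pos hτ))))

lemma θ₄_ne_zero (hτ : 0 < τ.im) : θ₄ τ ≠ 0 := by
  rw [θ₄_eq_η hτ]
  exact div_ne_zero (pow_ne_zero _ (η_ne_zero hτ)) (η_ne_zero (ofNat_mul_im_pos hτ))

lemma θ_mul_θ₄ (hτ : 0 < τ.im) : θ τ * θ₄ τ = θ₄ (2 * τ) ^ 2 := by
  have h2τ : 0 < (2 * τ).im := ofNat_mul_im_pos hτ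
  have h1 := η_ne_zero hτ
  have h2 : η (2 * τ) ≠ 0 := η_ne_zero h2τ
  rw [θ_eq_η hτ, θ₄_eq_η hτ, θ₄_eq_η h2τ, ← mul_assoc, show (2 * 2 : ℂ) = 4 by norm_num]
  field_simp

lemma θ₂_sq (hτ : 0 < τ.im) : θ₂ τ ^ 2 = 2 * θ (2 * τ) * θ₂ (2 * τ) := by
  have h2τ : 0 < (2 * τ).im := ofNat_mul_im_pos hτ
  have h2 : η (2 * τ) ≠ 0 := η_ne_zero h2τ
  have h4 : η (4 * τ) ≠ 0 := η_ne_zero (ofNat_mul_im_pos hτ)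
  have h8 : η (8 * τ) ≠ 0 := η_ne_zero (ofNat_mul_im_pos hτ)
  rw [θ_eq_η h2τ, θ₂_eq_η h2τ, θ₂_eq_η hτ]
  simp only [← mul_assoc, show (2 * 2 : ℂ) = 4 by norm_num, show (4 * 2 : ℂ) = 8 by norm_num]
  generalize η (8 * τ) = x at h8 ⊢
  field_simp

theorem θ_pow_four (hτ : 0 < τ.im) : θ τ ^ 4 = θ₂ τ ^ 4 + θ₄ τ ^ 4 := by
  linear_combination (θ τ ^ 2 + θ (2 * τ) ^ 2 + θ₂ (2 * τ) ^ 2) * θ_sq hτ -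
    (θ₄ τ ^ 2 + θ (2 * τ) ^ 2 - θ₂ (2 * τ) ^ 2) * θ₄_sq hτ -
    (2 * θ (2 * τ) * θ₂ (2 * τ) + θ₂ τ ^ 2) * θ₂_sq hτ

end Eta

section LogarithmicDerivatives

variable {τ : ℂ}

lemma E₂_eq_E2 (τ : UpperHalfPlane) : E₂ τ = EisensteinSeries.E2 τ := by
  rw [EisensteinSeries.E2_eq_tsum_cexp, E₂,
    tsum_pnat_eq_tsum_succ (f := fun n : ℕ ↦ (ArithmeticFunction.sigma 1 n : ℂ) *
      cexp (2 * Real.pi * I * τ) ^ n)]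
  simp [sigmaC, qq, ArithmeticFunction.sigma_apply]

lemma hasDerivAt_η (hτ : 0 < τ.im) : HasDerivAt η (Real.pi * I / 12 * E₂ τ * η τ) τ := by
  have hlog : logDeriv ModularForm.eta τ = _ := ModularForm.logDeriv_eta_eq_E2 ⟨τ, hτ⟩
  rw [← E₂_eq_E2, logDeriv_apply, div_eq_iff (ModularForm.eta_ne_zero hτ)] at hlog
  rw [η_eq_eta]
  exact hlog ▸ (ModularForm.differentiableAt_eta_of_mem_upperHalfPlaneSet hτ).hasDerivAt

lemma hasDerivAt_comp_const_mul {𝕜 : Type*} [NontriviallyNormedField 𝕜] {f : 𝕜 → 𝕜} {f' c x : 𝕜}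
    (hf : HasDerivAt f f' (c * x)) : HasDerivAt (fun z ↦ f (c * z)) (c * f') x := by
  simpa [mul_comm, Function.comp_def] using hf.comp x ((hasDerivAt_id x).const_mul c)

lemma eventually_im_pos (hτ : 0 < τ.im) : ∀ᶠ z in 𝓝 τ, 0 < z.im :=
  continuous_im.continuousAt.eventually_const_lt hτ

lemma hasDerivAt_θ (hτ : 0 < τ.im) :
    HasDerivAt θ (Real.pi * I / 6 * (5 * E₂ (2 * τ) - E₂ τ - 4 * E₂ (4 * τ)) * θ τ) τ := by
  have h2τ : 0 < (2 * τ).im := ofNat_mul_im_pos hτ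
  have h4τ : 0 < (4 * τ).im := ofNat_mul_im_pos hτ
  have h1 := η_ne_zero hτ
  have h2 := η_ne_zero h2τ
  have h4 := η_ne_zero h4τ
  have h := ((hasDerivAt_comp_const_mul (hasDerivAt_η h2τ)).fun_pow 5).fun_div
    (((hasDerivAt_η hτ).fun_mul (hasDerivAt_comp_const_mul (hasDerivAt_η h4τ))).fun_pow 2)
    (pow_ne_zero 2 (mul_ne_zero h1 h4))
  convert! h.congr_of_eventuallyEq ((eventually_im_pos hτ).mono fun z hz ↦ θ_eq_η hz) using 1
  rw [θ_eq_η hτ]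
  generalize η (4 * τ) = x at h4 ⊢
  field_simp
  ring

lemma hasDerivAt_θ₂ (hτ : 0 < τ.im) :
    HasDerivAt θ₂ (Real.pi * I / 6 * (4 * E₂ (4 * τ) - E₂ (2 * τ)) * θ₂ τ) τ := by
  have h2τ : 0 < (2 * τ).im := ofNat_mul_im_pos hτ
  have h4τ : 0 < (4 * τ).im := ofNat_mul_im_pos hτ
  have h2 := η_ne_zero h2τ
  have h := (((hasDerivAt_comp_const_mul (hasDerivAt_η h4τ)).fun_pow 2).const_mul 2).fun_div
    (hasDerivAt_comp_const_mul (hasDerivAt_η h2τ)) h2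
  convert! h.congr_of_eventuallyEq ((eventually_im_pos hτ).mono fun z hz ↦ θ₂_eq_η hz) using 1
  rw [θ₂_eq_η hτ]
  field_simp
  ring

lemma hasDerivAt_θ₄ (hτ : 0 < τ.im) :
    HasDerivAt θ₄ (Real.pi * I / 6 * (E₂ τ - E₂ (2 * τ)) * θ₄ τ) τ := by
  have h2τ : 0 < (2 * τ).im := ofNat_mul_im_pos hτ
  have h2 := η_ne_zero h2τ
  have h := ((hasDerivAt_η hτ).fun_pow 2).fun_div
    (hasDerivAt_comp_const_mul (hasDerivAt_η h2τ)) h2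
  convert! h.congr_of_eventuallyEq ((eventually_im_pos hτ).mono fun z hz ↦ θ₄_eq_η hz) using 1
  rw [θ₄_eq_η hτ]
  field_simp
  ring

-- Up to the factor `πi/4`, `E₄₂ + E₄₂'` is the logarithmic derivative of `θ₂ / θ`, and the
-- difference `E₄₂ - E₄₂'` is that of `θ / θ₄`.
lemma E₄₂_add_mul_θ_sq (hτ : 0 < τ.im) :
    (E₄₂ τ + E₄₂' τ) * θ τ ^ 2 = (E₄₂ (2 * τ) + E₄₂' (2 * τ)) * θ₄ τ ^ 2 := by
  have h2τ : 0 < (2 * τ).im := ofNat_mul_im_pos hτ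
  have hderiv := ((hasDerivAt_θ hτ).fun_pow 2).unique
    ((((hasDerivAt_comp_const_mul (hasDerivAt_θ h2τ)).fun_pow 2).fun_add
      ((hasDerivAt_comp_const_mul (hasDerivAt_θ₂ h2τ)).fun_pow 2)).congr_of_eventuallyEq
        ((eventually_im_pos hτ).mono fun z hz ↦ θ_sq hz))
  have hdouble : 2 * (2 * τ) = 4 * τ := by ring
  have hquad : 4 * (2 * τ) = 8 * τ := by ring
  simp only [hdouble, hquad] at hderiv
  simp only [E₄₂, E₄₂', hdouble, hquad]
  apply mul_left_cancel₀ (mul_ne_zero (ofReal_ne_zero.mpr Real.pi_ne_zero) I_ne_zero)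
  rw [θ₄_sq hτ]
  linear_combination
    -2 * hderiv + 2 / 3 * Real.pi * I * (4 * E₂ (4 * τ) - E₂ (2 * τ)) * θ_sq hτ

lemma E₄₂_sub_mul_θ₄_pow_four (hτ : 0 < τ.im) :
    (E₄₂ τ - E₄₂' τ) * θ₄ τ ^ 4 = (E₄₂ τ + E₄₂' τ) * θ₂ τ ^ 4 := by
  have hderiv := ((hasDerivAt_θ hτ).fun_pow 4).unique
    ((((hasDerivAt_θ₂ hτ).fun_pow 4).fun_add
      ((hasDerivAt_θ₄ hτ).fun_pow 4)).congr_of_eventuallyEq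
        ((eventually_im_pos hτ).mono fun z hz ↦ θ_pow_four hz))
  apply mul_left_cancel₀ (mul_ne_zero (ofReal_ne_zero.mpr Real.pi_ne_zero) I_ne_zero)
  simp only [E₄₂, E₄₂']
  linear_combination
    hderiv - 2 / 3 * Real.pi * I * (5 * E₂ (2 * τ) - E₂ τ - 4 * E₂ (4 * τ)) * θ_pow_four hτ

end LogarithmicDerivatives

section Cusp

lemma tendsto_tsum_mul_pow_succ {𝕜 : Type*} [NormedField 𝕜] [CompleteSpace 𝕜] {a : ℕ → 𝕜} {r : 𝕜}
    (hr : r ≠ 0) (hsum : Summable fun n ↦ ‖a n * r ^ (n + 1)‖) :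
    Tendsto (fun q ↦ ∑' n, a n * q ^ (n + 1)) (𝓝 0) (𝓝 0) := by
  have hlim : Tendsto (fun q ↦ ∑' n, a n * q ^ (n + 1)) (𝓝 0) (𝓝 (∑' n, a n * 0 ^ (n + 1))) := by
    refine tendsto_tsum_of_dominated_convergence hsum
      (fun n ↦ (tendsto_id.pow (n + 1)).const_mul (a n)) ?_
    filter_upwards [Metric.closedBall_mem_nhds 0 (norm_pos_iff.mpr hr)] with q hq n
    rw [mem_closedBall_zero_iff] at hq
    rw [norm_mul, norm_mul, norm_pow, norm_pow]
    gcongr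
  simpa using hlim

lemma tendsto_ofNat_mul_comap_im {c : ℕ} [c.AtLeastTwo] :
    Tendsto (fun τ : ℂ ↦ ofNat(c) * τ) (comap im atTop) (comap im atTop) := by
  rw [tendsto_comap_iff]
  have him : im ∘ (fun τ : ℂ ↦ ofNat(c) * τ) = fun τ ↦ (c : ℝ) * τ.im := by
    ext τ
    rw [Function.comp_apply, ← Nat.cast_ofNat, ← ofReal_natCast, im_ofReal_mul]
    rfl
  rw [him]
  exact tendsto_comap.const_mul_atTop (Nat.cast_pos.mpr (NeZero.pos c))

lemma eq_of_comp_two_mul_eq_of_tendsto_comap_im {X : Type*} [TopologicalSpace X] [T2Space X]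
    {f : ℂ → X} {x : X}
    (hf : ∀ τ : ℂ, 0 < τ.im → f (2 * τ) = f τ) (hlim : Tendsto f (comap im atTop) (𝓝 x))
    {τ : ℂ} (hτ : 0 < τ.im) : f τ = x := by
  have him (n : ℕ) : (2 ^ n * τ).im = 2 ^ n * τ.im := by
    rw [← im_ofReal_mul]
    norm_cast
  have hconst (n : ℕ) : f (2 ^ n * τ) = f τ := by
    induction n with
    | zero => rw [pow_zero, one_mul]
    | succ n ih => rw [pow_succ', mul_assoc, hf _ (by rw [him]; positivity), ih]
  have hseq : Tendsto (fun n : ℕ ↦ 2 ^ n * τ) atTop (comap im atTop) := by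
    simp only [tendsto_comap_iff, Function.comp_def, him]
    exact (tendsto_pow_atTop_atTop_of_one_lt one_lt_two).atTop_mul_const hτ
  exact tendsto_nhds_unique tendsto_const_nhds ((hlim.comp hseq).congr hconst)

lemma tendsto_qq_comap_im : Tendsto qq (comap im atTop) (𝓝 0) := by
  have hqParam : qq = Function.Periodic.qParam 1 := by
    ext τ
    simp [qq, Function.Periodic.qParam]
  rw [hqParam]
  exact (Function.Periodic.qParam_tendsto one_pos).mono_right nhdsWithin_le_nhds

lemma tendsto_E₂_comap_im : Tendsto E₂ (comap im atTop) (𝓝 1) := by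
  have hsum : Summable fun n : ℕ ↦ sigmaC 1 (n + 1) * qq I ^ (n + 1) := by
    simpa [sigmaC, qq, ArithmeticFunction.sigma_apply] using (summable_nat_add_iff 1).mpr
      (EisensteinSeries.summable_sigma_mul_cexp_pow (k := 2) one_le_two UpperHalfPlane.I)
  have hlim := (tendsto_tsum_mul_pow_succ (qq_ne_zero I) hsum.norm).comp tendsto_qq_comap_im
  convert! (hlim.const_mul 24).const_sub 1 using 2
  rw [mul_zero, sub_zero]

lemma tendsto_θ₄_comap_im : Tendsto θ₄ (comap im atTop) (𝓝 1) := by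
  have hφ := (continuousAt_eulerFunction (q := 0) (by simp)).tendsto
  rw [eulerFunction_zero] at hφ
  have hq2 : Tendsto (fun τ ↦ qq τ ^ 2) (comap im atTop) (𝓝 0) := by
    simpa using tendsto_qq_comap_im.pow 2
  have hlim := ((hφ.comp tendsto_qq_comap_im).pow 2).div (hφ.comp hq2) one_ne_zero
  rw [one_pow, div_one] at hlim
  refine hlim.congr' ?_
  filter_upwards [tendsto_comap.eventually (eventually_gt_atTop 0)] with τ hτ
  exact (eq_div_of_mul_eq
    (eulerFunction_ne_zero (norm_pow_lt_one (norm_qq_lt_one hτ) two_ne_zero))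
    (θ₄_mul_eulerFunction hτ)).symm

end Cusp

section EtaQuotients

variable {τ : ℂ}

theorem E₄₂_add_E₄₂' (hτ : 0 < τ.im) : E₄₂ τ + E₄₂' τ = 2 * θ₄ τ ^ 4 := by
  have hinv (z : ℂ) (hz : 0 < z.im) :
      (E₄₂ (2 * z) + E₄₂' (2 * z)) / θ₄ (2 * z) ^ 4 = (E₄₂ z + E₄₂' z) / θ₄ z ^ 4 := by
    have h3 := θ_ne_zero hz
    have h4 := θ₄_ne_zero hz
    rw [show θ₄ (2 * z) ^ 4 = (θ z * θ₄ z) ^ 2 by rw [θ_mul_θ₄ hz]; ring]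
    field_simp
    linear_combination -E₄₂_add_mul_θ_sq hz
  have h1 := tendsto_E₂_comap_im
  have h2 := tendsto_E₂_comap_im.comp (tendsto_ofNat_mul_comap_im (c := 2))
  have h4 := tendsto_E₂_comap_im.comp (tendsto_ofNat_mul_comap_im (c := 4))
  have hlim : Tendsto (fun z ↦ (E₄₂ z + E₄₂' z) / θ₄ z ^ 4) (comap im atTop) (𝓝 2) := by
    have h := ((((h4.const_mul 4).sub h1).div_const 3).add
      (((h4.const_mul 4).sub (h2.const_mul 4)).add h1)).div (tendsto_θ₄_comap_im.pow 4) (by simp)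
    convert! h using 2
    norm_num
  exact (div_eq_iff (pow_ne_zero 4 (θ₄_ne_zero hτ))).mp
    (eq_of_comp_two_mul_eq_of_tendsto_comap_im hinv hlim hτ)

theorem E₄₂_sub_E₄₂' (hτ : 0 < τ.im) : E₄₂ τ - E₄₂' τ = 2 * θ₂ τ ^ 4 := by
  apply mul_right_cancel₀ (pow_ne_zero 4 (θ₄_ne_zero hτ))
  rw [E₄₂_sub_mul_θ₄_pow_four hτ, E₄₂_add_E₄₂' hτ]
  ring

theorem η_two_mul_pow (hτ : 0 < τ.im) :
    η (2 * τ) ^ 24 = (η τ * η (4 * τ)) ^ 8 * (η τ ^ 8 + 16 * η (4 * τ) ^ 8) := by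
  have h1 := η_ne_zero hτ
  have h2 : η (2 * τ) ≠ 0 := η_ne_zero (ofNat_mul_im_pos hτ)
  have h4 : η (4 * τ) ≠ 0 := η_ne_zero (ofNat_mul_im_pos hτ)
  have h := θ_pow_four hτ
  rw [θ_eq_η hτ, θ₂_eq_η hτ, θ₄_eq_η hτ] at h
  generalize η (4 * τ) = x at h4 h ⊢
  field_simp at h
  linear_combination h

end EtaQuotients

theorem stmt17 (τ : ℂ) (hτ : 0 < τ.im) :
    E₄₂ τ - E₄₂' τ = 32 * η (4 * τ) ^ 8 / η (2 * τ) ^ 4 ∧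
    E₄₂ τ + E₄₂' τ = 2 * η τ ^ 8 / η (2 * τ) ^ 4 ∧
    E₄₂ τ ^ 2 - E₄₂' τ ^ 2 = 64 * (η τ * η (4 * τ) / η (2 * τ)) ^ 8 ∧
    η (2 * τ) ^ 24 = (η τ * η (4 * τ)) ^ 8 * (η τ ^ 8 + 16 * η (4 * τ) ^ 8) := by
  have hsub : E₄₂ τ - E₄₂' τ = 32 * η (4 * τ) ^ 8 / η (2 * τ) ^ 4 := by
    rw [E₄₂_sub_E₄₂' hτ, θ₂_eq_η hτ]
    ring
  have hadd : E₄₂ τ + E₄₂' τ = 2 * η τ ^ 8 / η (2 * τ) ^ 4 := by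
    rw [E₄₂_add_E₄₂' hτ, θ₄_eq_η hτ]
    ring
  refine ⟨hsub, hadd, ?_, η_two_mul_pow hτ⟩
  rw [sq_sub_sq, hadd, hsub]
  ring
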